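/- Let 0 ≤ β < 1 and let N be a positive integer with binary expansion N = 2^{ν_0} + 2^{ν_1} + … + 2^{ν_σ}, where ν_0 > ν_1 > … > ν_σ ≥ 0. Then F_β(N) = Σ_{g=0}^{σ} exp(2πi(β·Σ_{j=0}^{g−1} 2^{ν_j} + g/2)) · Π_{k=0}^{ν_g−1} (1 + exp(2πi(β·2^k + 1/2))). (Lemma 1.) -/

import Mathlib

/-- `s n` is the number of 1's in the binary expansion of `n`. -/
def s (n : ℕ) : ℕ := (Nat.digits 2 n).sum

/-- `F β N = Σ_{n<N} exp(2πi(β n + s(n)/2))`. -/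
noncomputable def F (β : ℝ) (N : ℕ) : ℂ :=
  ∑ n ∈ Finset.range N,
    Complex.exp (2 * Real.pi * Complex.I * ((β : ℂ) * n + (s n : ℂ) / 2))

/-!
The summand `exp (2πi (β n + s n / 2))` is 2-multiplicative: it turns an addition without binary
carries into a product. Hence its sum over a block `[M, M + 2 ^ k)` with `2 ^ k ∣ M` is its value
at `M` times its sum over `[0, 2 ^ k)`. For `M = 2 ^ k` this is a doubling relation, which gives
the sum over `[0, 2 ^ k)` as a product; cutting `[0, N)` at the partial sums
`2 ^ ν_0 + … + 2 ^ ν_{g-1}` then gives the formula.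
-/

open Finset

/-- A 2-multiplicative function in the sense of Gelfond: it is determined by its values at the
powers of two, through the binary expansion. That `M` and `m` have no common binary digit is encoded
by a power of two that divides `M` and exceeds `m`. -/
structure IsTwoMultiplicative {R : Type*} [MulOneClass R] (f : ℕ → R) : Prop where
  map_zero : f 0 = 1
  map_add_of_dvd_of_lt {k M m : ℕ} (hM : 2 ^ k ∣ M) (hm : m < 2 ^ k) : f (M + m) = f M * f m

lemma two_pow_dvd_sum_two_pow {ν : ℕ → ℕ} {g k : ℕ} (h : ∀ j < g, k ≤ ν j) :
    2 ^ k ∣ ∑ j ∈ range g, 2 ^ ν j :=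
  dvd_sum fun j hj => pow_dvd_pow 2 (h j (mem_range.mp hj))

namespace IsTwoMultiplicative

lemma map_sum_two_pow {R : Type*} [CommMonoid R] {f : ℕ → R} (hf : IsTwoMultiplicative f)
    {ν : ℕ → ℕ} {m : ℕ} (hν : StrictAntiOn ν (Set.Iio m)) :
    f (∑ j ∈ range m, 2 ^ ν j) = ∏ j ∈ range m, f (2 ^ ν j) := by
  induction m with
  | zero => simpa using hf.map_zero
  | succ m ih =>
    -- Divisibility by `2 ^ (ν m + 1)`, not just by `2 ^ ν m`, leaves the digit `ν m` free.
    have hdvd : 2 ^ (ν m + 1) ∣ ∑ j ∈ range m, 2 ^ ν j :=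
      two_pow_dvd_sum_two_pow fun j hj => hν (hj.trans m.lt_succ_self) m.lt_succ_self hj
    rw [sum_range_succ, prod_range_succ,
      hf.map_add_of_dvd_of_lt hdvd (Nat.pow_lt_pow_right one_lt_two (ν m).lt_succ_self),
      ih (hν.mono (Set.Iio_subset_Iio m.le_succ))]

variable {R : Type*} [CommSemiring R] {f : ℕ → R}

lemma sum_range_add (hf : IsTwoMultiplicative f) {k M K : ℕ} (hM : 2 ^ k ∣ M) (hK : K ≤ 2 ^ k) :
    ∑ n ∈ range (M + K), f n = ∑ n ∈ range M, f n + f M * ∑ n ∈ range K, f n := by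
  rw [Finset.sum_range_add, mul_sum]
  congr 1
  exact sum_congr rfl fun n hn =>
    hf.map_add_of_dvd_of_lt hM ((mem_range.mp hn).trans_le hK)

lemma sum_range_two_pow (hf : IsTwoMultiplicative f) (k : ℕ) :
    ∑ n ∈ range (2 ^ k), f n = ∏ i ∈ range k, (1 + f (2 ^ i)) := by
  induction k with
  | zero => simpa using hf.map_zero
  | succ k ih =>
    rw [pow_succ, mul_two, hf.sum_range_add dvd_rfl le_rfl, ih, prod_range_succ]
    ring

theorem sum_range_sum_two_pow (hf : IsTwoMultiplicative f) {ν : ℕ → ℕ} {m : ℕ}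
    (hν : StrictAntiOn ν (Set.Iio m)) :
    ∑ n ∈ range (∑ g ∈ range m, 2 ^ ν g), f n =
      ∑ g ∈ range m, (∏ j ∈ range g, f (2 ^ ν j)) * ∏ k ∈ range (ν g), (1 + f (2 ^ k)) := by
  induction m with
  | zero => simp
  | succ m ih =>
    have hν' : StrictAntiOn ν (Set.Iio m) := hν.mono (Set.Iio_subset_Iio m.le_succ)
    have hdvd : 2 ^ ν m ∣ ∑ j ∈ range m, 2 ^ ν j :=
      two_pow_dvd_sum_two_pow fun j hj => (hν (hj.trans m.lt_succ_self) m.lt_succ_self hj).le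
    rw [sum_range_succ, hf.sum_range_add hdvd le_rfl, ih hν', hf.map_sum_two_pow hν',
      hf.sum_range_two_pow, sum_range_succ _ m]

end IsTwoMultiplicative

lemma s_zero : s 0 = 0 := by simp [s]

lemma s_two_pow_mul_add (a : ℕ) {k m : ℕ} (hm : m < 2 ^ k) : s (2 ^ k * a + m) = s a + s m := by
  rcases a.eq_zero_or_pos with rfl | ha
  · simp [s_zero]
  · have hlen : (Nat.digits 2 m).length ≤ k := (Nat.digits_length_le_iff one_lt_two m).mpr hm
    have hdigits := Nat.digits_append_zeroes_append_digits (k := k - (Nat.digits 2 m).length)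
      (n := m) one_lt_two ha
    rw [Nat.add_sub_cancel' hlen] at hdigits
    rw [s, add_comm, ← hdigits]
    simp [s, add_comm]

lemma s_two_pow_mul (k a : ℕ) : s (2 ^ k * a) = s a := by
  simpa [s_zero] using s_two_pow_mul_add a (Nat.two_pow_pos k)

lemma s_two_pow (k : ℕ) : s (2 ^ k) = 1 := by
  simpa [s] using s_two_pow_mul k 1

lemma s_add_of_dvd_of_lt {k M m : ℕ} (hM : 2 ^ k ∣ M) (hm : m < 2 ^ k) :
    s (M + m) = s M + s m := by
  obtain ⟨a, rfl⟩ := hM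
  rw [s_two_pow_mul_add a hm, s_two_pow_mul]

lemma isTwoMultiplicative_exp (α β : ℂ) :
    IsTwoMultiplicative fun n : ℕ =>
      Complex.exp (2 * Real.pi * Complex.I * (β * n + α * s n)) where
  map_zero := by simp [s_zero]
  map_add_of_dvd_of_lt hM hm := by
    rw [s_add_of_dvd_of_lt hM hm, ← Complex.exp_add]
    push_cast
    ring_nf

theorem F_binary_expansion_formula_general (α β : ℂ) {ν : ℕ → ℕ} {m : ℕ}
    (hν : StrictAntiOn ν (Set.Iio m)) :
    ∑ n ∈ range (∑ g ∈ range m, 2 ^ ν g),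
        Complex.exp (2 * Real.pi * Complex.I * (β * n + α * s n)) =
      ∑ g ∈ range m,
        Complex.exp (2 * Real.pi * Complex.I * (β * ∑ j ∈ range g, (2 : ℂ) ^ ν j + α * g)) *
          ∏ k ∈ range (ν g), (1 + Complex.exp (2 * Real.pi * Complex.I * (β * 2 ^ k + α))) := by
  have hprod (g : ℕ) :
      ∏ j ∈ range g, Complex.exp (2 * Real.pi * Complex.I * (β * 2 ^ ν j + α)) =
        Complex.exp (2 * Real.pi * Complex.I * (β * ∑ j ∈ range g, (2 : ℂ) ^ ν j + α * g)) := by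
    rw [← Complex.exp_sum, ← mul_sum, sum_add_distrib, ← mul_sum, sum_const, card_range,
      nsmul_eq_mul, mul_comm α]
  simpa only [s_two_pow, Nat.cast_pow, Nat.cast_ofNat, Nat.cast_one, mul_one, hprod] using
    (isTwoMultiplicative_exp α β).sum_range_sum_two_pow hν

/-- Lemma 1: if `N = 2^{ν_0} + … + 2^{ν_σ}` with `ν_0 > … > ν_σ ≥ 0`, then
`F_β(N) = Σ_{g≤σ} exp(2πi(β Σ_{j<g} 2^{ν_j} + g/2)) Π_{k<ν_g} (1 + exp(2πi(β 2^k + 1/2)))`. -/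
theorem F_binary_expansion_formula
    (β : ℝ) (hβ0 : 0 ≤ β) (hβ1 : β < 1)
    (σ : ℕ) (ν : ℕ → ℕ)
    (hν : ∀ i j : ℕ, i < j → j ≤ σ → ν j < ν i)
    (N : ℕ) (hN : N = ∑ g ∈ Finset.range (σ + 1), 2 ^ (ν g)) :
    F β N = ∑ g ∈ Finset.range (σ + 1),
      Complex.exp (2 * Real.pi * Complex.I *
          ((β : ℂ) * (∑ j ∈ Finset.range g, (2 : ℂ) ^ (ν j)) + (g : ℂ) / 2)) *
        ∏ k ∈ Finset.range (ν g),
          (1 + Complex.exp (2 * Real.pi * Complex.I * ((β : ℂ) * 2 ^ k + 1 / 2))) := by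
  simpa only [F, hN, one_div_mul_eq_div] using F_binary_expansion_formula_general (1 / 2) β
    fun i _ j hj hij => hν i j hij (Nat.lt_succ_iff.mp hj)
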